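/- Let ℓ > 0 and x ∈ S. Then u_ℓ(x) = min_{λ∈Δᵐ} sup_{y∈S} Σ_{i=1}^m λ_i ( F_i(x) − F_i(y) − (ℓ/2)‖x − y‖² ), and the minimum over Δᵐ on the right-hand side is attained. -/

import Mathlib

/-- The regularized merit function
`u_ℓ(x) = max_{y ∈ S} min_i (F i x - F i y - (ℓ/2)‖x - y‖²)`. -/
noncomputable def meritU {n m : ℕ} (ℓ : ℝ) (S : Set (EuclideanSpace ℝ (Fin n)))
    (F : Fin m → EuclideanSpace ℝ (Fin n) → ℝ)
    (x : EuclideanSpace ℝ (Fin n)) : ℝ :=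
  sSup ((fun y => ⨅ i, (F i x - F i y - ℓ / 2 * ‖x - y‖ ^ 2)) '' S)

/-- The weighted dual value `λ ↦ sup_{y ∈ S} Σ_i λ_i (F i x - F i y - (ℓ/2)‖x - y‖²)`. -/
noncomputable def dualValU {n m : ℕ} (ℓ : ℝ) (S : Set (EuclideanSpace ℝ (Fin n)))
    (F : Fin m → EuclideanSpace ℝ (Fin n) → ℝ)
    (x : EuclideanSpace ℝ (Fin n)) (lam : Fin m → ℝ) : ℝ :=
  sSup ((fun y => ∑ i, lam i * (F i x - F i y - ℓ / 2 * ‖x - y‖ ^ 2)) '' S)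

/-!
The weights enter only through the values `z i = F i x - F i y - ℓ / 2 * ‖x - y‖ ^ 2`. Since these
are concave in `y`, the set of vectors dominated by some attained `z` is convex in `ι → ℝ`, and
passing to it changes neither supremum. On it the problem is the bilinear pairing `(λ, z) ↦ λ ⬝ᵥ z`
with `λ` in the compact simplex, where `min_i z i = min_λ λ ⬝ᵥ z`, so Sion's theorem applies. The
suprema are finite because a lower semicontinuous convex function has an affine minorant, which the
quadratic term absorbs.
-/

section Simplex

theorem monotone_iInf_of_finite {ι α : Type*} [Finite ι] [ConditionallyCompleteLattice α]
    [Nonempty α] : Monotone fun z : ι → α ↦ ⨅ i, z i :=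
  fun z _ hz ↦ ciInf_mono (Set.finite_range z).bddBelow hz

variable {ι : Type*} [Fintype ι]

theorem monotone_dotProduct_of_nonneg {w : ι → ℝ} (hw : 0 ≤ w) : Monotone (w ⬝ᵥ ·) :=
  fun _ _ hz ↦ dotProduct_le_dotProduct_of_nonneg_left hz hw

theorem iInf_le_dotProduct_of_mem_stdSimplex {w : ι → ℝ} (hw : w ∈ stdSimplex ℝ ι) (z : ι → ℝ) :
    ⨅ i, z i ≤ w ⬝ᵥ z :=
  calc ⨅ i, z i = w ⬝ᵥ fun _ ↦ ⨅ i, z i := by rw [dotProduct, ← Finset.sum_mul, hw.2, one_mul]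
    _ ≤ w ⬝ᵥ z := monotone_dotProduct_of_nonneg hw.1 (ciInf_le (Set.finite_range z).bddBelow)

theorem isLeast_dotProduct_image_stdSimplex [Nonempty ι] (z : ι → ℝ) :
    IsLeast ((· ⬝ᵥ z) '' stdSimplex ℝ ι) (⨅ i, z i) := by
  classical
  obtain ⟨i, hi⟩ := exists_eq_ciInf_of_finite (f := z)
  refine ⟨⟨Pi.single i 1, single_mem_stdSimplex ℝ i, ?_⟩, ?_⟩
  · simp only [single_one_dotProduct, hi]
  · rintro _ ⟨w, hw, rfl⟩
    exact iInf_le_dotProduct_of_mem_stdSimplex hw z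

variable {T : Set (ι → ℝ)}

theorem isLUB_sSup_dotProduct_image (hT : T.Nonempty) (hTbdd : BddAbove T) {w : ι → ℝ}
    (hw : 0 ≤ w) : IsLUB ((w ⬝ᵥ ·) '' T) (sSup ((w ⬝ᵥ ·) '' T)) :=
  isLUB_csSup (hT.image _) ((monotone_dotProduct_of_nonneg hw).map_bddAbove hTbdd)

theorem exists_isMinOn_stdSimplex_sSup_dotProduct [Nonempty ι] (hTbdd : BddAbove T) :
    ∃ w ∈ stdSimplex ℝ ι, IsMinOn (fun w ↦ sSup ((w ⬝ᵥ ·) '' T)) (stdSimplex ℝ ι) w := by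
  classical
  refine LowerSemicontinuousOn.exists_isMinOn
    ⟨_, single_mem_stdSimplex ℝ (Classical.arbitrary ι)⟩ (isCompact_stdSimplex ℝ ι) ?_
  simp only [sSup_image']
  refine lowerSemicontinuousOn_ciSup (fun w hw ↦ ?_) fun z ↦ ?_
  · rw [← Set.image_eq_range]
    exact (monotone_dotProduct_of_nonneg hw.1).map_bddAbove hTbdd
  · exact (show Continuous (· ⬝ᵥ z.1) by fun_prop).lowerSemicontinuous.lowerSemicontinuousOn _

theorem sSup_iInf_image_eq_of_isMinOn_stdSimplex [Nonempty ι] (hT : T.Nonempty)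
    (hTconv : Convex ℝ T) (hTbdd : BddAbove T) {w : ι → ℝ} (hw : w ∈ stdSimplex ℝ ι)
    (hmin : IsMinOn (fun w ↦ sSup ((w ⬝ᵥ ·) '' T)) (stdSimplex ℝ ι) w) :
    sSup ((fun z : ι → ℝ ↦ ⨅ i, z i) '' T) = sSup ((w ⬝ᵥ ·) '' T) := by
  have hinf_bdd : BddAbove ((fun z : ι → ℝ ↦ ⨅ i, z i) '' T) :=
    monotone_iInf_of_finite.map_bddAbove hTbdd
  have hlin_right (v : ι → ℝ) : IsLinearMap ℝ (v ⬝ᵥ ·) :=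
    ⟨dotProduct_add v, fun c ↦ dotProduct_smul c v⟩
  have hlin_left (z : ι → ℝ) : IsLinearMap ℝ (· ⬝ᵥ z) :=
    ⟨fun u v ↦ add_dotProduct u v z, fun c v ↦ smul_dotProduct c v z⟩
  refine (Sion.minimax (f := fun v z : ι → ℝ ↦ v ⬝ᵥ z) ⟨w, hw⟩ (isCompact_stdSimplex ℝ ι)
    (fun z _ ↦ ?_) (fun z _ ↦ ?_) hTconv (fun v _ ↦ ?_) (fun v _ ↦ ?_) (convex_stdSimplex ℝ ι)
    _ (fun v hv ↦ isLUB_sSup_dotProduct_image hT hTbdd hv.1)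
    _ (hmin.isGLB hw)
    _ (fun z _ ↦ (isLeast_dotProduct_image_stdSimplex z).isGLB)
    _ (isLUB_csSup (hT.image _) hinf_bdd)).symm
  · exact (show Continuous (· ⬝ᵥ z) by fun_prop).lowerSemicontinuous.lowerSemicontinuousOn _
  · exact (((hlin_left z).mk' _).convexOn (convex_stdSimplex ℝ ι)).quasiconvexOn
  · exact (show Continuous (v ⬝ᵥ ·) by fun_prop).upperSemicontinuous.upperSemicontinuousOn _
  · exact (((hlin_right v).mk' _).concaveOn hTconv).quasiconcaveOn

end Simplex

section ConcaveFamily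

theorem sSup_image_lowerClosure {α β : Type*} [Preorder α] [ConditionallyCompleteLinearOrder β]
    {φ : α → β} (hφ : Monotone φ) (A : Set α) : sSup (φ '' lowerClosure A) = sSup (φ '' A) := by
  refine csSup_eq_csSup_of_forall_exists_le ?_ ?_
  · rintro _ ⟨a, ⟨b, hb, hab⟩, rfl⟩
    exact ⟨φ b, Set.mem_image_of_mem φ hb, hφ hab⟩
  · rintro _ ⟨b, hb, rfl⟩
    exact ⟨φ b, Set.mem_image_of_mem φ (subset_lowerClosure hb), le_rfl⟩

theorem convex_lowerClosure_image {𝕜 E β : Type*} [Semiring 𝕜] [PartialOrder 𝕜]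
    [AddCommMonoid E] [Module 𝕜 E] [AddCommMonoid β] [PartialOrder β] [IsOrderedAddMonoid β]
    [Module 𝕜 β] [PosSMulMono 𝕜 β] {S : Set E} {G : E → β} (hG : ConcaveOn 𝕜 S G) :
    Convex 𝕜 (lowerClosure (G '' S) : Set β) := by
  convert hG.convex_hypograph.linear_image (LinearMap.snd 𝕜 E β) using 1
  ext z
  simp

theorem exists_stdSimplex_sSup_iInf_eq_sSup_sum {ι E : Type*} [Fintype ι] [Nonempty ι]
    [AddCommMonoid E] [Module ℝ E] {S : Set E} (hS : S.Nonempty) {g : ι → E → ℝ}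
    (hg : ∀ i, ConcaveOn ℝ S (g i)) (hgbdd : ∀ i, BddAbove (g i '' S)) :
    ∃ w ∈ stdSimplex ℝ ι,
      sSup ((fun y ↦ ⨅ i, g i y) '' S) = sSup ((fun y ↦ ∑ i, w i * g i y) '' S) ∧
      IsMinOn (fun w ↦ sSup ((fun y ↦ ∑ i, w i * g i y) '' S)) (stdSimplex ℝ ι) w := by
  let G : E → ι → ℝ := fun y i ↦ g i y
  let T : Set (ι → ℝ) := lowerClosure (G '' S)
  have hG : ConcaveOn ℝ S G :=
    ⟨(hg (Classical.arbitrary ι)).1, fun _ hx _ hy _ _ ha hb hab i ↦ (hg i).2 hx hy ha hb hab⟩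
  have hT : T.Nonempty := (hS.image G).mono subset_lowerClosure
  have hTbdd : BddAbove T := by
    rw [bddAbove_lowerClosure, bddAbove_pi]
    intro i
    rw [Set.image_image]
    exact hgbdd i
  have hsum {w : ι → ℝ} (hw : w ∈ stdSimplex ℝ ι) :
      sSup ((w ⬝ᵥ ·) '' T) = sSup ((fun y ↦ ∑ i, w i * g i y) '' S) := by
    rw [sSup_image_lowerClosure (monotone_dotProduct_of_nonneg hw.1), Set.image_image]
    rfl
  have hinf : sSup ((fun z : ι → ℝ ↦ ⨅ i, z i) '' T) = sSup ((fun y ↦ ⨅ i, g i y) '' S) := by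
    rw [sSup_image_lowerClosure monotone_iInf_of_finite, Set.image_image]
  obtain ⟨w, hw, hmin⟩ := exists_isMinOn_stdSimplex_sSup_dotProduct hTbdd
  refine ⟨w, hw, ?_, fun v hv ↦ ?_⟩
  · rw [← hinf, ← hsum hw]
    exact sSup_iInf_image_eq_of_isMinOn_stdSimplex hT (convex_lowerClosure_image hG) hTbdd hw hmin
  · simpa only [Set.mem_ofPred_eq, hsum hw, hsum hv] using hmin hv

end ConcaveFamily

section RegularizedGap

variable {E : Type*} [SeminormedAddCommGroup E]

/-- The gap `f x - f y` penalized by `ℓ / 2` times the squared distance: the quantity inside the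
minimum and the weighted sum of the merit function. -/
noncomputable def regularizedGap (ℓ : ℝ) (f : E → ℝ) (x y : E) : ℝ :=
  f x - f y - ℓ / 2 * ‖x - y‖ ^ 2

variable [NormedSpace ℝ E] {ℓ : ℝ} {f : E → ℝ}

theorem concaveOn_regularizedGap {S : Set E} (hf : ConvexOn ℝ S f) (hℓ : 0 ≤ ℓ) (x : E) :
    ConcaveOn ℝ S (regularizedGap ℓ f x) := by
  have hdist : ConvexOn ℝ S fun y ↦ ‖x - y‖ := by
    simpa only [dist_eq_norm, norm_sub_rev] using convexOn_dist x hf.1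
  have hsq : ConvexOn ℝ S fun y ↦ ℓ / 2 * ‖x - y‖ ^ 2 :=
    (hdist.pow (fun _ _ ↦ norm_nonneg _) 2).smul (div_nonneg hℓ zero_le_two)
  exact ((concaveOn_const (f x) hf.1).sub hf).sub hsq

theorem exists_affine_le_of_convexOn_univ (hf : ConvexOn ℝ Set.univ f)
    (hlsc : LowerSemicontinuous f) : ∃ (l : E →L[ℝ] ℝ) (c : ℝ), ∀ y, l y + c ≤ f y := by
  obtain ⟨l, c, hle, -⟩ := hf.exists_affine_le_of_lt (𝕜 := ℝ) (Set.mem_univ 0)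
    (sub_one_lt (f 0)) isClosed_univ (hlsc.lowerSemicontinuousOn _)
  exact ⟨l, c, fun y ↦ hle ⟨y, Set.mem_univ y⟩⟩

theorem bddAbove_range_regularizedGap (hf : ConvexOn ℝ Set.univ f) (hlsc : LowerSemicontinuous f)
    (hℓ : 0 < ℓ) (x : E) : BddAbove (Set.range (regularizedGap ℓ f x)) := by
  obtain ⟨l, c, hl⟩ := exists_affine_le_of_convexOn_univ hf hlsc
  refine ⟨f x - l x - c + ‖l‖ ^ 2 / (2 * ℓ), ?_⟩
  rintro _ ⟨y, rfl⟩
  have hslope : l x - l y ≤ ‖l‖ * ‖x - y‖ := by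
    rw [← map_sub]
    exact (le_abs_self _).trans (l.le_opNorm _)
  have habsorb : ‖l‖ * ‖x - y‖ - ℓ / 2 * ‖x - y‖ ^ 2 ≤ ‖l‖ ^ 2 / (2 * ℓ) := by
    rw [le_div_iff₀ (by positivity)]
    nlinarith [sq_nonneg (‖l‖ - ℓ * ‖x - y‖)]
  simp only [regularizedGap]
  linarith [hl y]

theorem meritU_minimax_general {ι : Type*} [Fintype ι] [Nonempty ι] {S : Set E}
    (hS : S.Nonempty) (hSconv : Convex ℝ S) {F : ι → E → ℝ}
    (hFconv : ∀ i, ConvexOn ℝ Set.univ (F i)) (hFlsc : ∀ i, LowerSemicontinuous (F i))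
    (hℓ : 0 < ℓ) (x : E) :
    ∃ w ∈ stdSimplex ℝ ι,
      sSup ((fun y ↦ ⨅ i, regularizedGap ℓ (F i) x y) '' S) =
        sSup ((fun y ↦ ∑ i, w i * regularizedGap ℓ (F i) x y) '' S) ∧
      IsMinOn (fun w ↦ sSup ((fun y ↦ ∑ i, w i * regularizedGap ℓ (F i) x y) '' S))
        (stdSimplex ℝ ι) w :=
  exists_stdSimplex_sSup_iInf_eq_sSup_sum hS
    (fun i ↦ concaveOn_regularizedGap ((hFconv i).subset (Set.subset_univ S) hSconv) hℓ.le x)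
    fun i ↦ (bddAbove_range_regularizedGap (hFconv i) (hFlsc i) hℓ x).mono
      (Set.image_subset_range _ S)

end RegularizedGap

/-- minimax (Sion) representation of `u_ℓ`:
`u_ℓ(x) = min_{λ ∈ Δᵐ} sup_{y ∈ S} Σ_i λ_i (F i x - F i y - (ℓ/2)‖x - y‖²)`, with the
minimum over the standard simplex attained. -/
theorem meritU_minimax {n m : ℕ} (hm : 0 < m)
    (S : Set (EuclideanSpace ℝ (Fin n))) (hS : S.Nonempty)
    (hSclosed : IsClosed S) (hSconv : Convex ℝ S)
    (F : Fin m → EuclideanSpace ℝ (Fin n) → ℝ)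
    (hFconv : ∀ i, ConvexOn ℝ Set.univ (F i))
    (ℓ : ℝ) (hℓ : 0 < ℓ)
    (x : EuclideanSpace ℝ (Fin n)) (hx : x ∈ S) :
    ∃ lam ∈ stdSimplex ℝ (Fin m),
      meritU ℓ S F x = dualValU ℓ S F x lam ∧
      ∀ lam' ∈ stdSimplex ℝ (Fin m), dualValU ℓ S F x lam ≤ dualValU ℓ S F x lam' := by
  have : Nonempty (Fin m) := Fin.pos_iff_nonempty.mp hm
  exact meritU_minimax_general hS hSconv hFconv
    (fun i ↦ (continuousOn_univ.mp ((hFconv i).continuousOn isOpen_univ)).lowerSemicontinuous) hℓ x
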